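/- Let g ≥ 2. The closure of the commutator subgroup of the kernel of the reduction map GSp_{2g}(ℤ_2) → GSp_{2g}(ℤ/2ℤ) equals the kernel of the reduction map Sp_{2g}(ℤ_2) → Sp_{2g}(ℤ/4ℤ). -/

import Mathlib

open Matrix

/-- The standard symplectic matrix `Ω`, block-diagonal with `2×2` blocks `[[0,1],[-1,0]]`. -/
def OmegaMat (g : ℕ) (R : Type) [CommRing R] : Matrix (Fin (2*g)) (Fin (2*g)) R :=
  Matrix.of fun i j =>
    if (i : ℕ) + 1 = (j : ℕ) ∧ (j : ℕ) % 2 = 1 then 1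
    else if (j : ℕ) + 1 = (i : ℕ) ∧ (i : ℕ) % 2 = 1 then -1 else 0

/-- The symplectic group `Sp_{2g}(R)`, as a set of invertible matrices:
those `S` with `SᵀΩS = Ω`. -/
def SpSet (g : ℕ) (R : Type) [CommRing R] : Set (GL (Fin (2*g)) R) :=
  {S | (S : Matrix (Fin (2*g)) (Fin (2*g)) R)ᵀ * OmegaMat g R * S = OmegaMat g R}

/-- The general symplectic group `GSp_{2g}(R)`, as a set of invertible matrices:
those `S` with `SᵀΩS = m·Ω` for some unit `m` (the multiplier). -/
def GSpSet (g : ℕ) (R : Type) [CommRing R] : Set (GL (Fin (2*g)) R) :=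
  {S | ∃ m : Rˣ, (S : Matrix (Fin (2*g)) (Fin (2*g)) R)ᵀ * OmegaMat g R * S = (m : R) • OmegaMat g R}

/-- Entrywise mod-2 reduction `GL_{2g}(ℤ_2) → GL_{2g}(ℤ/2ℤ)`. -/
noncomputable def redMod2 (g : ℕ) : GL (Fin (2*g)) ℤ_[2] →* GL (Fin (2*g)) (ZMod 2) :=
  Units.map ((PadicInt.toZMod).mapMatrix.toMonoidHom)

/-- Entrywise mod-4 reduction `GL_{2g}(ℤ_2) → GL_{2g}(ℤ/4ℤ)`. -/
noncomputable def redMod4 (g : ℕ) : GL (Fin (2*g)) ℤ_[2] →* GL (Fin (2*g)) (ZMod (2^2)) :=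
  Units.map ((PadicInt.toZModPow 2).mapMatrix.toMonoidHom)

/-- The kernel of the reduction map `GSp_{2g}(ℤ_2) → GSp_{2g}(ℤ/2ℤ)`: the elements of
`GSp_{2g}(ℤ_2)` that reduce to the identity mod 2, as a subgroup of `GL_{2g}(ℤ_2)`. -/
def GSpKer (g : ℕ) : Subgroup (GL (Fin (2*g)) ℤ_[2]) where
  carrier := {x | x ∈ GSpSet g ℤ_[2] ∧ redMod2 g x = 1}
  one_mem' := by
    refine ⟨⟨1, ?_⟩, MonoidHom.map_one _⟩
    simp
  mul_mem' := by
    rintro a b ⟨⟨m, hm⟩, ha1⟩ ⟨⟨m', hm'⟩, hb1⟩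
    refine ⟨⟨m * m', ?_⟩, by rw [MonoidHom.map_mul, ha1, hb1, mul_one]⟩
    have hval : ((a * b : GL (Fin (2*g)) ℤ_[2]) : Matrix (Fin (2*g)) (Fin (2*g)) ℤ_[2])
        = (a : Matrix (Fin (2*g)) (Fin (2*g)) ℤ_[2]) * (b : Matrix (Fin (2*g)) (Fin (2*g)) ℤ_[2]) :=
      Units.val_mul a b
    rw [hval, Matrix.transpose_mul]
    calc (b : Matrix (Fin (2*g)) (Fin (2*g)) ℤ_[2])ᵀ * (a : Matrix (Fin (2*g)) (Fin (2*g)) ℤ_[2])ᵀ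
          * OmegaMat g ℤ_[2]
          * ((a : Matrix (Fin (2*g)) (Fin (2*g)) ℤ_[2]) * (b : Matrix (Fin (2*g)) (Fin (2*g)) ℤ_[2]))
        = (b : Matrix (Fin (2*g)) (Fin (2*g)) ℤ_[2])ᵀ
            * (((a : Matrix (Fin (2*g)) (Fin (2*g)) ℤ_[2])ᵀ * OmegaMat g ℤ_[2]
              * (a : Matrix (Fin (2*g)) (Fin (2*g)) ℤ_[2]))
            * (b : Matrix (Fin (2*g)) (Fin (2*g)) ℤ_[2])) := by
          simp only [mul_assoc]
      _ = (b : Matrix (Fin (2*g)) (Fin (2*g)) ℤ_[2])ᵀ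
            * (((m : ℤ_[2]) • OmegaMat g ℤ_[2]) * (b : Matrix (Fin (2*g)) (Fin (2*g)) ℤ_[2])) := by
          rw [hm]
      _ = (m : ℤ_[2]) • ((b : Matrix (Fin (2*g)) (Fin (2*g)) ℤ_[2])ᵀ * OmegaMat g ℤ_[2]
            * (b : Matrix (Fin (2*g)) (Fin (2*g)) ℤ_[2])) := by
          simp only [Matrix.smul_mul, Matrix.mul_smul, mul_assoc]
      _ = (m : ℤ_[2]) • ((m' : ℤ_[2]) • OmegaMat g ℤ_[2]) := by rw [hm']
      _ = ((m * m' : ℤ_[2]ˣ) : ℤ_[2]) • OmegaMat g ℤ_[2] := by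
          rw [smul_smul, Units.val_mul]
  inv_mem' := by
    rintro a ⟨⟨m, hm⟩, ha1⟩
    refine ⟨⟨m⁻¹, ?_⟩, by rw [MonoidHom.map_inv, ha1, inv_one]⟩
    set A : Matrix (Fin (2*g)) (Fin (2*g)) ℤ_[2] := (a : Matrix (Fin (2*g)) (Fin (2*g)) ℤ_[2]) with hA
    set B : Matrix (Fin (2*g)) (Fin (2*g)) ℤ_[2] :=
      ((a⁻¹ : GL (Fin (2*g)) ℤ_[2]) : Matrix (Fin (2*g)) (Fin (2*g)) ℤ_[2]) with hB
    have hAB : A * B = 1 := a.mul_inv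
    have h2 : OmegaMat g ℤ_[2] = ((m⁻¹ : ℤ_[2]ˣ) : ℤ_[2]) • (Aᵀ * OmegaMat g ℤ_[2] * A) := by
      rw [hm, smul_smul, Units.inv_mul, one_smul]
    calc Bᵀ * OmegaMat g ℤ_[2] * B
        = Bᵀ * (((m⁻¹ : ℤ_[2]ˣ) : ℤ_[2]) • (Aᵀ * OmegaMat g ℤ_[2] * A)) * B := by rw [← h2]
      _ = ((m⁻¹ : ℤ_[2]ˣ) : ℤ_[2]) • ((Bᵀ * Aᵀ) * OmegaMat g ℤ_[2] * (A * B)) := by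
          simp only [Matrix.smul_mul, Matrix.mul_smul, mul_assoc]
      _ = ((m⁻¹ : ℤ_[2]ˣ) : ℤ_[2]) • OmegaMat g ℤ_[2] := by
          rw [← Matrix.transpose_mul, hAB]
          simp

/-!
Filter the unit group of the matrix ring by the congruence subgroups `1 + O(ϖ ^ k)`, where
`ϖ = 2` in the application. If `u = 1 + ϖ x` and `v = 1 + ϖ ^ (k + 1) y`, then
`⁅u, v⁆ = 1 + ϖ ^ (k + 2) ⁅x, y⁆` up to `O(ϖ ^ (k + 3))`, so the leading terms of the commutator
subgroup at level `k + 2` form an additive group containing these brackets. An isometry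
`1 + ϖ ^ (k + 2) A` has `A = B Ω` with `B` symmetric modulo `ϖ`, and every such `A` is a leading
term of a commutator at its level: if `B` is supported on a coordinate Lagrangian then `B Ω` is the
bracket of the projection `D` onto that Lagrangian with `B Ω`, where the similitude `1 + ϖ D` is
available because multipliers are allowed, and for a hyperbolic pair `i, j` the bracket of
`single i i 1 * Ω` with `single j j c * Ω` is a multiple of `(single i j 1 + single j i 1) * Ω`.
Successive approximation along the filtration then puts every isometry congruent to `1` modulo
`ϖ ^ 2` into the closure of the commutator subgroup.
-/

open Filter Topology
open scoped commutatorElement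

section Congruence

variable {R A : Type*} [CommRing R] [Ring A] [Algebra R A]

/-- The principal congruence subgroup of level `a`: the units of `A` congruent to `1` modulo
`a • A`. For `A = Matrix n n R` it is the kernel of `GL n R → GL n (R ⧸ (a))`. -/
def principalCongruenceSubgroup (A : Type*) [Ring A] [Algebra R A] (a : R) : Subgroup Aˣ where
  carrier := {u | ∃ x : A, (u : A) = 1 + a • x}
  one_mem' := ⟨0, by simp⟩
  mul_mem' := by
    rintro u v ⟨x, hx⟩ ⟨y, hy⟩
    refine ⟨x * v + y, ?_⟩
    rw [Units.val_mul, hx, add_mul, one_mul, smul_mul_assoc, smul_add, hy]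
    abel
  inv_mem' := by
    rintro u ⟨x, hx⟩
    refine ⟨-(x * ↑u⁻¹), ?_⟩
    have h : (u : A) * ↑u⁻¹ = ↑u⁻¹ + a • (x * ↑u⁻¹) := by
      rw [hx, add_mul, one_mul, smul_mul_assoc]
    rw [smul_neg, ← sub_eq_add_neg, eq_sub_iff_add_eq, ← h, Units.mul_inv]

instance principalCongruenceSubgroup_normal (a : R) :
    (principalCongruenceSubgroup A a).Normal where
  conj_mem := by
    rintro u ⟨x, hx⟩ v
    refine ⟨v * x * ↑v⁻¹, ?_⟩
    rw [Units.val_mul, Units.val_mul, hx, mul_add, add_mul, mul_one, Units.mul_inv,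
      mul_smul_comm, smul_mul_assoc]

lemma principalCongruenceSubgroup_le_of_dvd {a b : R} (h : a ∣ b) :
    principalCongruenceSubgroup A b ≤ principalCongruenceSubgroup A a := by
  obtain ⟨c, rfl⟩ := h
  rintro u ⟨x, hx⟩
  exact ⟨c • x, by rw [hx, smul_smul]⟩

lemma coe_commutator_eq_one_add {a b : R} {u v : Aˣ} {x y : A}
    (hu : (u : A) = 1 + a • x) (hv : (v : A) = 1 + b • y) :
    ((⁅u, v⁆ : Aˣ) : A) = 1 + (a * b) • (⁅x, y⁆ * ↑(v * u)⁻¹) := by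
  have hsplit : (u * v : A) = v * u + (a * b) • ⁅x, y⁆ := by
    simp only [hu, hv, Ring.lie_def, add_mul, mul_add, smul_mul_assoc, mul_smul_comm, one_mul,
      mul_one]
    module
  have hcomm : ⁅u, v⁆ = u * v * (v * u)⁻¹ := by rw [commutatorElement_def]; group
  rw [hcomm, Units.val_mul, Units.val_mul, hsplit, add_mul, smul_mul_assoc, ← Units.val_mul v u,
    Units.mul_inv]

lemma commutator_principalCongruenceSubgroup_le (a b : R) :
    ⁅principalCongruenceSubgroup A a, principalCongruenceSubgroup A b⁆ ≤
      principalCongruenceSubgroup A (a * b) := by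
  rw [Subgroup.commutator_le]
  rintro u ⟨x, hx⟩ v ⟨y, hy⟩
  exact ⟨_, coe_commutator_eq_one_add hx hy⟩

/-- The leading terms at level `k + 1` of a group `H` of units: those `x` for which some element
of `H` has the form `1 + ϖ ^ (k + 1) x + O(ϖ ^ (k + 2))`. Level `0` is left out because leading
terms multiply there instead of adding up. -/
def leadingTerms (ϖ : R) (k : ℕ) (H : Subgroup Aˣ) : AddSubgroup A where
  carrier := {x | ∃ u ∈ H, ∃ y : A, (u : A) = 1 + ϖ ^ (k + 1) • (x + ϖ • y)}
  zero_mem' := ⟨1, one_mem _, 0, by simp⟩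
  add_mem' := by
    rintro x x' ⟨u, hu, y, h⟩ ⟨u', hu', y', h'⟩
    refine ⟨u * u', mul_mem hu hu', y + y' + ϖ ^ k • ((x + ϖ • y) * (x' + ϖ • y')), ?_⟩
    rw [Units.val_mul, h, h', add_mul, one_mul, mul_add, mul_one, smul_mul_smul_comm]
    module
  neg_mem' := by
    rintro x ⟨u, hu, y, h⟩
    obtain ⟨z, hz⟩ : u⁻¹ ∈ principalCongruenceSubgroup A (ϖ ^ (k + 1)) := inv_mem ⟨_, h⟩
    refine ⟨u⁻¹, inv_mem hu, -y - ϖ ^ k • ((x + ϖ • y) * z), ?_⟩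
    have hinv : ((u⁻¹ : Aˣ) : A) = 1 - ϖ ^ (k + 1) • ((x + ϖ • y) * ↑u⁻¹) := by
      rw [eq_sub_iff_add_eq, ← smul_mul_assoc, ← one_add_mul, ← h, Units.mul_inv]
    rw [hinv, hz, mul_add, mul_one, mul_smul_comm]
    module

lemma smul_mem_leadingTerms (ϖ : R) (k : ℕ) (H : Subgroup Aˣ) (x : A) :
    ϖ • x ∈ leadingTerms ϖ k H :=
  ⟨1, one_mem _, -x, by simp⟩

lemma lie_mem_leadingTerms_commutator {ϖ : R} {k : ℕ} {H K : Subgroup Aˣ} {u v : Aˣ} {x y : A}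
    (hu : u ∈ H) (hv : v ∈ K) (hux : (u : A) = 1 + ϖ • x)
    (hvy : (v : A) = 1 + ϖ ^ (k + 1) • y) :
    ⁅x, y⁆ ∈ leadingTerms ϖ (k + 1) ⁅H, K⁆ := by
  have hvϖ : v ∈ principalCongruenceSubgroup A ϖ :=
    principalCongruenceSubgroup_le_of_dvd (dvd_pow_self ϖ k.succ_ne_zero) ⟨y, hvy⟩
  obtain ⟨z, hz⟩ : (v * u)⁻¹ ∈ principalCongruenceSubgroup A ϖ :=
    inv_mem (mul_mem hvϖ ⟨x, hux⟩)
  refine ⟨⁅u, v⁆, Subgroup.commutator_mem_commutator hu hv, ⁅x, y⁆ * z, ?_⟩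
  rw [coe_commutator_eq_one_add hux hvy, hz, mul_add, mul_one, mul_smul_comm, ← pow_succ']

lemma mem_sup_of_mem_leadingTerms {ϖ : R} {k : ℕ} {H : Subgroup Aˣ} {u : Aˣ} {x : A}
    (hu : (u : A) = 1 + ϖ ^ (k + 1) • x) (hx : x ∈ leadingTerms ϖ k H) :
    u ∈ H ⊔ principalCongruenceSubgroup A (ϖ ^ (k + 2)) := by
  obtain ⟨c, hc, y, hcy⟩ := hx
  refine Subgroup.mem_sup_of_normal_right.mpr ⟨c, hc, c⁻¹ * u, ⟨-(↑c⁻¹ * y), ?_⟩, by group⟩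
  have huc : (u : A) = c - ϖ ^ (k + 2) • y := by
    rw [hu, hcy]
    module
  rw [Units.val_mul, huc, mul_sub, Units.inv_mul, mul_smul_comm, smul_neg, sub_eq_add_neg]

end Congruence

lemma inf_le_sup_of_forall_inf_le_sup_succ {G : Type*} [Group G] {S H : Subgroup G}
    {N : ℕ → Subgroup G} [∀ k, (N k).Normal] (hHS : H ≤ S)
    (hstep : ∀ k, S ⊓ N k ≤ H ⊔ N (k + 1)) (k : ℕ) : S ⊓ N 0 ≤ H ⊔ N k := by
  induction k with
  | zero => exact inf_le_right.trans le_sup_right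
  | succ k ih =>
    intro x hx
    obtain ⟨h, hh, y, hy, rfl⟩ := Subgroup.mem_sup_of_normal_right.mp (ih hx)
    have hyS : y ∈ S := (mul_mem_cancel_left (hHS hh)).mp hx.1
    exact mul_mem (le_sup_left (a := H) hh) (hstep k ⟨hyS, hy⟩)

section Adic

variable {n R : Type*} [Fintype n] [DecidableEq n] [CommRing R] {ϖ : R}

lemma mem_principalCongruenceSubgroup_iff_forall {a : R} {x : GL n R} :
    x ∈ principalCongruenceSubgroup (Matrix n n R) a ↔
      ∀ i j, x i j - (1 : Matrix n n R) i j ∈ Ideal.span {a} := by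
  simp only [Ideal.mem_span_singleton, dvd_def, sub_eq_iff_eq_add']
  constructor
  · rintro ⟨X, hX⟩ i j
    exact ⟨X i j, by rw [hX]; rfl⟩
  · intro h
    choose X hX using h
    exact ⟨of X, Matrix.ext hX⟩

lemma ker_generalLinearGroup_map {S : Type*} [CommRing S] {f : R →+* S} {a : R}
    (hf : RingHom.ker f = Ideal.span {a}) :
    (GeneralLinearGroup.map (n := n) f).ker = principalCongruenceSubgroup (Matrix n n R) a := by
  ext x
  rw [MonoidHom.mem_ker, GeneralLinearGroup.ext_iff, ← map_one (GeneralLinearGroup.map f),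
    mem_principalCongruenceSubgroup_iff_forall, ← hf]
  simp only [GeneralLinearGroup.map_apply, RingHom.mem_ker, map_sub, sub_eq_zero, Units.val_one]

variable [TopologicalSpace R]

omit [Fintype n] in
lemma tendsto_one_add_pow_smul (hϖ : IsAdic (Ideal.span {ϖ})) [IsTopologicalRing R]
    (X : ℕ → Matrix n n R) :
    Tendsto (fun k => 1 + ϖ ^ k • X k) atTop (𝓝 1) := by
  have hzero : Tendsto (fun k => ϖ ^ k • X k) atTop (𝓝 0) := by
    refine tendsto_pi_nhds.mpr fun i => tendsto_pi_nhds.mpr fun j => ?_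
    refine hϖ.hasBasis_nhds_zero.tendsto_right_iff.mpr fun m _ => ?_
    filter_upwards [eventually_ge_atTop m] with k hk
    have hpow : ϖ ^ k ∈ Ideal.span {ϖ} ^ m :=
      Ideal.pow_le_pow_right hk (Ideal.pow_mem_pow (Ideal.mem_span_singleton_self ϖ) k)
    exact Ideal.mul_mem_right _ _ hpow
  simpa only [add_zero] using hzero.const_add 1

lemma tendsto_one_of_mem_principalCongruenceSubgroup (hϖ : IsAdic (Ideal.span {ϖ}))
    [IsTopologicalRing R] {u : ℕ → GL n R}
    (hu : ∀ k, u k ∈ principalCongruenceSubgroup (Matrix n n R) (ϖ ^ k)) :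
    Tendsto u atTop (𝓝 1) := by
  have hval {v : ℕ → GL n R}
      (hv : ∀ k, v k ∈ principalCongruenceSubgroup (Matrix n n R) (ϖ ^ k)) :
      Tendsto (fun k => (v k : Matrix n n R)) atTop (𝓝 1) := by
    choose X hX using hv
    simpa only [hX] using tendsto_one_add_pow_smul hϖ X
  rw [Units.isEmbedding_embedProduct.tendsto_nhds_iff]
  exact (hval hu).prodMk_nhds
    ((MulOpposite.continuous_op.tendsto _).comp (hval fun k => inv_mem (hu k)))

lemma mem_closure_of_forall_mem_sup (hϖ : IsAdic (Ideal.span {ϖ})) [IsTopologicalRing R]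
    {H : Subgroup (GL n R)} {x : GL n R}
    (hx : ∀ k, x ∈ H ⊔ principalCongruenceSubgroup (Matrix n n R) (ϖ ^ k)) :
    x ∈ closure (H : Set (GL n R)) := by
  simp only [Subgroup.mem_sup_of_normal_right] at hx
  choose h hh u hu hhu using hx
  have hu_inv := (tendsto_one_of_mem_principalCongruenceSubgroup hϖ hu).inv.const_mul x
  have hlim : Tendsto h atTop (𝓝 x) := by
    simpa only [← eq_mul_inv_of_mul_eq (hhu _), inv_one, mul_one] using hu_inv
  exact mem_closure_of_tendsto hlim (Eventually.of_forall hh)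

lemma isClosed_principalCongruenceSubgroup (hϖ : IsAdic (Ideal.span {ϖ})) [IsTopologicalRing R]
    (k : ℕ) :
    IsClosed (principalCongruenceSubgroup (Matrix n n R) (ϖ ^ k) : Set (GL n R)) := by
  have hideal : IsClosed ((Ideal.span {ϖ} ^ k : Ideal R) : Set R) :=
    AddSubgroup.isClosed_of_isOpen (Ideal.span {ϖ} ^ k).toAddSubgroup
      ((isAdic_iff.mp hϖ).1 k)
  have heq : (principalCongruenceSubgroup (Matrix n n R) (ϖ ^ k) : Set (GL n R)) =
      ⋂ i, ⋂ j, {x : GL n R | x i j - (1 : Matrix n n R) i j ∈ Ideal.span {ϖ} ^ k} := by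
    ext x
    simp only [Set.mem_iInter, Ideal.span_singleton_pow]
    exact mem_principalCongruenceSubgroup_iff_forall
  rw [heq]
  refine isClosed_iInter fun i => isClosed_iInter fun j => hideal.preimage ?_
  exact (Units.continuous_val.matrix_elem i j).sub continuous_const

end Adic

section Similitude

variable {n R : Type*} [Fintype n] [DecidableEq n] [CommRing R] {Ω : Matrix n n R}

/-- `S` is a similitude of the bilinear form with matrix `Ω`, with multiplier `m`. -/
def IsSimilitude (Ω : Matrix n n R) (m : Rˣ) (S : GL n R) : Prop :=
  (S : Matrix n n R)ᵀ * Ω * (S : Matrix n n R) = (m : R) • Ω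

namespace IsSimilitude

variable {m m' : Rˣ} {S S' : GL n R}

lemma one (Ω : Matrix n n R) : IsSimilitude Ω 1 (1 : GL n R) := by
  simp [IsSimilitude]

lemma mul (h : IsSimilitude Ω m S) (h' : IsSimilitude Ω m' S') :
    IsSimilitude Ω (m * m') (S * S') := by
  unfold IsSimilitude at *
  calc ((S * S' : GL n R) : Matrix n n R)ᵀ * Ω * ((S * S' : GL n R) : Matrix n n R)
      = (S' : Matrix n n R)ᵀ * ((S : Matrix n n R)ᵀ * Ω * S) * S' := by
        simp only [Units.val_mul, transpose_mul, mul_assoc]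
    _ = ((m * m' : Rˣ) : R) • Ω := by
        rw [h, mul_smul_comm, smul_mul_assoc, h', smul_smul, Units.val_mul]

lemma inv (h : IsSimilitude Ω m S) : IsSimilitude Ω m⁻¹ S⁻¹ := by
  unfold IsSimilitude at *
  set T : Matrix n n R := ((S⁻¹ : GL n R) : Matrix n n R)
  have hST : (S : Matrix n n R) * T = 1 := S.mul_inv
  calc Tᵀ * Ω * T = ((m⁻¹ : Rˣ) : R) • (Tᵀ * ((m : R) • Ω) * T) := by
        rw [mul_smul_comm, smul_mul_assoc, smul_smul, Units.inv_mul, one_smul]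
    _ = ((m⁻¹ : Rˣ) : R) • (((S : Matrix n n R) * T)ᵀ * Ω * ((S : Matrix n n R) * T)) := by
        simp only [← h, transpose_mul, mul_assoc]
    _ = ((m⁻¹ : Rˣ) : R) • Ω := by
        rw [hST, transpose_one, one_mul, mul_one]

lemma commutator (h : IsSimilitude Ω m S) (h' : IsSimilitude Ω m' S') :
    IsSimilitude Ω 1 ⁅S, S'⁆ := by
  simpa only [commutatorElement_def, mul_inv_cancel_comm, mul_inv_cancel] using
    ((h.mul h').mul h.inv).mul h'.inv

end IsSimilitude

/-- The general group `{S | ∃ m, SᵀΩS = m Ω}` of similitudes of `Ω`; it is `GSp` when `Ω` is a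
symplectic form. -/
def similitudeGroup (Ω : Matrix n n R) : Subgroup (GL n R) where
  carrier := {S | ∃ m : Rˣ, IsSimilitude Ω m S}
  one_mem' := ⟨1, .one Ω⟩
  mul_mem' := fun ⟨_, h⟩ ⟨_, h'⟩ => ⟨_, h.mul h'⟩
  inv_mem' := fun ⟨_, h⟩ => ⟨_, h.inv⟩

/-- The group `{S | SᵀΩS = Ω}` of isometries of `Ω`; it is `Sp` when `Ω` is a symplectic form. -/
def isometryGroup (Ω : Matrix n n R) : Subgroup (GL n R) where
  carrier := {S | IsSimilitude Ω 1 S}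
  one_mem' := .one Ω
  mul_mem' h h' := mul_one (1 : Rˣ) ▸ h.mul h'
  inv_mem' h := inv_one (G := Rˣ) ▸ h.inv

lemma mem_isometryGroup {S : GL n R} :
    S ∈ isometryGroup Ω ↔ (S : Matrix n n R)ᵀ * Ω * (S : Matrix n n R) = Ω := by
  change IsSimilitude Ω 1 S ↔ _
  rw [IsSimilitude, Units.val_one, one_smul]

lemma commutator_similitudeGroup_le (Ω : Matrix n n R) :
    ⁅similitudeGroup Ω, similitudeGroup Ω⁆ ≤ isometryGroup Ω := by
  rw [Subgroup.commutator_le]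
  rintro S ⟨m, h⟩ S' ⟨m', h'⟩
  exact h.commutator h'

lemma isClosed_isometryGroup [TopologicalSpace R] [IsTopologicalRing R] [T2Space R]
    (Ω : Matrix n n R) : IsClosed (isometryGroup Ω : Set (GL n R)) := by
  have heq : (isometryGroup Ω : Set (GL n R)) =
      {S : GL n R | (S : Matrix n n R)ᵀ * Ω * (S : Matrix n n R) = Ω} :=
    Set.ext fun _ => mem_isometryGroup
  rw [heq]
  exact isClosed_eq (by fun_prop) continuous_const

lemma transpose_mul_add_mul_eq_of_mem_isometryGroup {a : R} (ha : IsRegular a) {S : GL n R}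
    {X : Matrix n n R} (hS : S ∈ isometryGroup Ω) (hX : (S : Matrix n n R) = 1 + a • X) :
    Xᵀ * Ω + Ω * X = -(a • (Xᵀ * Ω * X)) := by
  have h : a • (Xᵀ * Ω + Ω * X + a • (Xᵀ * Ω * X)) = a • (0 : Matrix n n R) := by
    rw [mem_isometryGroup, hX, transpose_add, transpose_smul, transpose_one, ← sub_eq_zero] at hS
    rw [smul_zero, ← hS]
    simp only [add_mul, mul_add, smul_mul_assoc, mul_smul_comm, one_mul, mul_one]
    module
  exact eq_neg_of_add_eq_zero_left ((IsSMulRegular.matrix ha.left.isSMulRegular) h)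

/-- For symmetric `B` with `B * Ω * B = 0`, the matrix `1 + B * Ω` is the exponential of the
element `B * Ω` of the Lie algebra of the isometry group. -/
lemma exists_mem_isometryGroup_eq_one_add {B : Matrix n n R} (hΩ : Ωᵀ = -Ω) (hB : B.IsSymm)
    (hBB : B * Ω * B = 0) :
    ∃ S ∈ isometryGroup Ω, (S : Matrix n n R) = 1 + B * Ω := by
  have hsq : (B * Ω) ^ 2 = 0 := by rw [pow_two, ← mul_assoc, hBB, zero_mul]
  obtain ⟨S, hS⟩ := IsNilpotent.isUnit_one_add ⟨2, hsq⟩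
  refine ⟨S, mem_isometryGroup.mpr ?_, hS⟩
  have hcubic : Ω * B * Ω * (B * Ω) = Ω * (B * Ω * B) * Ω := by simp only [mul_assoc]
  rw [hS, transpose_add, transpose_one, transpose_mul, hΩ, hB.eq]
  simp only [add_mul, mul_add, one_mul, mul_one, neg_mul, hcubic, hBB, mul_zero, zero_mul]
  rw [mul_assoc]
  abel

/-- `s` spans a coordinate Lagrangian with complementary coordinate Lagrangian `sᶜ`: the form `Ω`
only pairs coordinates in `s` with coordinates outside `s`. -/
def IsCoordinateLagrangian (Ω : Matrix n n R) (s : Finset n) : Prop :=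
  ∀ i j, Ω i j ≠ 0 → (i ∈ s ↔ j ∉ s)

/-- The projection of `n → R` onto the coordinates in `s`. -/
def coordinateProjection (R : Type*) [CommRing R] (s : Finset n) : Matrix n n R :=
  diagonal fun i => if i ∈ s then 1 else 0

lemma coordinateProjection_mul_single {s : Finset n} {i : n} (hi : i ∈ s) (j : n) (r : R) :
    coordinateProjection R s * single i j r = single i j r := by
  ext a b
  rw [coordinateProjection, diagonal_mul]
  rcases eq_or_ne i a with rfl | ha
  · rw [if_pos hi, one_mul]
  · rw [single_apply_of_row_ne ha, mul_zero]

namespace IsCoordinateLagrangian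

variable {s : Finset n} (hs : IsCoordinateLagrangian Ω s)
include hs

lemma mul_coordinateProjection :
    Ω * coordinateProjection R s = (1 - coordinateProjection R s) * Ω := by
  ext i j
  rw [coordinateProjection, sub_mul, one_mul, Matrix.sub_apply, mul_diagonal, diagonal_mul]
  by_cases hij : Ω i j = 0
  · simp [hij]
  · by_cases hj : j ∈ s <;> simp [hj, hs i j hij]

lemma exists_isSimilitude (u : Rˣ) {a : R} (hu : (u : R) = 1 + a) :
    ∃ S : GL n R, IsSimilitude Ω u S ∧
      (S : Matrix n n R) = 1 + a • coordinateProjection R s := by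
  let d : n → Rˣ := fun i => if i ∈ s then u else 1
  let S : GL n R := Units.map (diagonalRingHom n R).toMonoidHom (MulEquiv.piUnits.symm d)
  have hS : (S : Matrix n n R) = diagonal fun i => (d i : R) := rfl
  refine ⟨S, ?_, ?_⟩
  · rw [IsSimilitude, hS, diagonal_transpose]
    ext i j
    rw [mul_diagonal, diagonal_mul, Matrix.smul_apply, smul_eq_mul]
    by_cases hij : Ω i j = 0
    · rw [hij, mul_zero, zero_mul, mul_zero]
    · by_cases hj : j ∈ s <;> simp [d, hj, hs i j hij, mul_comm]
  · rw [hS, coordinateProjection, ← diagonal_one, ← diagonal_smul, diagonal_add]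
    congr 1
    ext i
    by_cases hi : i ∈ s <;> simp [d, hi, hu]

end IsCoordinateLagrangian

/-- The principal congruence subgroup of level `a` of the group of similitudes of `Ω`. -/
def similitudeCongruenceSubgroup (Ω : Matrix n n R) (a : R) : Subgroup (GL n R) :=
  similitudeGroup Ω ⊓ principalCongruenceSubgroup (Matrix n n R) a

/-- The principal congruence subgroup of level `a` of the group of isometries of `Ω`. -/
def isometryCongruenceSubgroup (Ω : Matrix n n R) (a : R) : Subgroup (GL n R) :=
  isometryGroup Ω ⊓ principalCongruenceSubgroup (Matrix n n R) a

lemma commutator_similitudeCongruenceSubgroup_le (Ω : Matrix n n R) (a : R) :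
    ⁅similitudeCongruenceSubgroup Ω a, similitudeCongruenceSubgroup Ω a⁆ ≤
      isometryCongruenceSubgroup Ω (a ^ 2) := by
  rw [pow_two]
  exact le_inf
    ((Subgroup.commutator_mono inf_le_left inf_le_left).trans (commutator_similitudeGroup_le Ω))
    ((Subgroup.commutator_mono inf_le_right inf_le_right).trans
      (commutator_principalCongruenceSubgroup_le a a))

section CommutatorLeadingTerms

variable {ϖ : R} {B : Matrix n n R}

lemma exists_mem_similitudeCongruenceSubgroup_eq_one_add_smul (k : ℕ) (hΩ : Ωᵀ = -Ω)
    (hB : B.IsSymm) (hBB : B * Ω * B = 0) :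
    ∃ S ∈ similitudeCongruenceSubgroup Ω ϖ, (S : Matrix n n R) = 1 + ϖ ^ (k + 1) • (B * Ω) := by
  obtain ⟨S, hS, hSB⟩ := exists_mem_isometryGroup_eq_one_add (B := ϖ ^ (k + 1) • B) hΩ
    (hB.smul _) (by rw [smul_mul_assoc, smul_mul_smul_comm, hBB, smul_zero])
  rw [smul_mul_assoc] at hSB
  exact ⟨S, ⟨⟨1, hS⟩, ϖ ^ k • (B * Ω), by rw [hSB, smul_smul, pow_succ']⟩, hSB⟩

lemma lie_mul_mem_leadingTerms_commutator {B' : Matrix n n R} (hΩ : Ωᵀ = -Ω) (k : ℕ)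
    (hB : B.IsSymm) (hBB : B * Ω * B = 0) (hB' : B'.IsSymm) (hBB' : B' * Ω * B' = 0) :
    ⁅B * Ω, B' * Ω⁆ ∈ leadingTerms ϖ (k + 1)
      ⁅similitudeCongruenceSubgroup Ω ϖ, similitudeCongruenceSubgroup Ω ϖ⁆ := by
  obtain ⟨S, hS, hSB⟩ := exists_mem_similitudeCongruenceSubgroup_eq_one_add_smul 0 hΩ hB hBB
  obtain ⟨S', hS', hSB'⟩ := exists_mem_similitudeCongruenceSubgroup_eq_one_add_smul k hΩ hB' hBB'
  exact lie_mem_leadingTerms_commutator hS hS' (by rwa [zero_add, pow_one] at hSB) hSB'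

/-- The projection `D` onto the coordinates in `s` satisfies `⁅D, B * Ω⁆ = B * Ω`, and `1 + ϖ • D`
is a similitude although `D` does not come from the isometry group. -/
lemma IsCoordinateLagrangian.mul_mem_leadingTerms_commutator {s : Finset n}
    (hs : IsCoordinateLagrangian Ω s) (hΩ : Ωᵀ = -Ω) (hϖ : IsUnit (1 + ϖ)) (k : ℕ)
    (hB : B.IsSymm) (hBs : coordinateProjection R s * B = B) :
    B * Ω ∈ leadingTerms ϖ (k + 1)
      ⁅similitudeCongruenceSubgroup Ω ϖ, similitudeCongruenceSubgroup Ω ϖ⁆ := by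
  have hBs' : B * coordinateProjection R s = B := by
    simpa [hB.eq, coordinateProjection] using congrArg transpose hBs
  have hBΩs : B * Ω * coordinateProjection R s = 0 := by
    rw [mul_assoc, hs.mul_coordinateProjection, ← mul_assoc, mul_sub, mul_one, hBs', sub_self,
      zero_mul]
  have hBB : B * Ω * B = 0 := by
    rw [← hBs, ← mul_assoc, hBs, hBΩs, zero_mul]
  have hlie : ⁅coordinateProjection R s, B * Ω⁆ = B * Ω := by
    rw [Ring.lie_def, hBΩs, sub_zero, ← mul_assoc, hBs]
  obtain ⟨S, hS, hSs⟩ := hs.exists_isSimilitude hϖ.unit hϖ.unit_spec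
  obtain ⟨S', hS', hSB⟩ := exists_mem_similitudeCongruenceSubgroup_eq_one_add_smul k hΩ hB hBB
  rw [← hlie]
  exact lie_mem_leadingTerms_commutator ⟨⟨_, hS⟩, _, hSs⟩ hS' hSs hSB

lemma single_add_single_mul_mem_leadingTerms_commutator (hΩ : Ωᵀ = -Ω) (k : ℕ) {i j : n}
    (hi : Ω i i = 0) (hj : Ω j j = 0) (hij : IsUnit (Ω i j)) (r : R) :
    (single i j r + single j i r) * Ω ∈ leadingTerms ϖ (k + 1)
      ⁅similitudeCongruenceSubgroup Ω ϖ, similitudeCongruenceSubgroup Ω ϖ⁆ := by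
  obtain ⟨c, rfl⟩ : ∃ c, r = Ω i j * c := hij.dvd
  have hji : Ω j i = -Ω i j := congrFun₂ hΩ i j
  have hlie : ⁅single i i 1 * Ω, single j j c * Ω⁆ =
      (single i j (Ω i j * c) + single j i (Ω i j * c)) * Ω := by
    rw [Ring.lie_def, ← mul_assoc, ← mul_assoc, single_mul_mul_single, single_mul_mul_single, hji,
      ← sub_mul, sub_eq_add_neg, one_mul, mul_one, mul_neg, mul_comm c, single_neg, neg_neg]
  rw [← hlie]
  refine lie_mul_mem_leadingTerms_commutator hΩ k ?_ ?_ ?_ ?_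
  · exact transpose_single ..
  · rw [single_mul_mul_single, hi, mul_zero, zero_mul, single_zero]
  · exact transpose_single ..
  · rw [single_mul_mul_single, hj, mul_zero, zero_mul, single_zero]

end CommutatorLeadingTerms

end Similitude

section SymmetricModulo

variable {n R : Type*} [Finite n] [DecidableEq n] [CommRing R] {L : AddSubgroup (Matrix n n R)}

lemma diagonal_mem_of_forall_single_mem (hdiag : ∀ i r, single i i r ∈ L) (d : n → R) :
    diagonal d ∈ L := by
  have := Fintype.ofFinite n
  rw [← sum_single_eq_diagonal]
  exact sum_mem fun i _ => hdiag i (d i)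

lemma add_transpose_mem_of_forall_single_add_single_mem
    (hoff : ∀ i j r, single i j r + single j i r ∈ L) (U : Matrix n n R) : U + Uᵀ ∈ L := by
  have := Fintype.ofFinite n
  have hsum : U + Uᵀ = ∑ i, ∑ j, (single i j (U i j) + single j i (U i j)) := by
    simp only [Finset.sum_add_distrib, ← matrix_eq_sum_single]
    rw [add_right_inj, matrix_eq_sum_single Uᵀ, Finset.sum_comm]
    rfl
  rw [hsum]
  exact sum_mem fun i _ => sum_mem fun j _ => hoff i j _

lemma mem_of_transpose_sub_eq_smul {ϖ : R} (hdiag : ∀ i r, single i i r ∈ L)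
    (hoff : ∀ i j r, single i j r + single j i r ∈ L) (hsmul : ∀ X, ϖ • X ∈ L)
    {B X : Matrix n n R} (hB : Bᵀ - B = ϖ • X) : B ∈ L := by
  let e := Finite.equivFin n
  let U : Matrix n n R := of fun i j => if e i < e j then B i j else 0
  let Y : Matrix n n R := of fun i j => if e j < e i then X j i else 0
  have hsplit : B = diagonal B.diag + (U + Uᵀ) + ϖ • Y := by
    ext i j
    have hij : B i j - B j i = ϖ * X j i := congrFun₂ hB j i
    rcases lt_trichotomy (e i) (e j) with hlt | heq | hgt
    · simp [U, Y, hlt, hlt.not_gt, diagonal_apply_ne _ (ne_of_apply_ne e hlt.ne)]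
    · obtain rfl := e.injective heq
      simp [U, Y]
    · simp [U, Y, hgt, hgt.not_gt, diagonal_apply_ne _ (ne_of_apply_ne e hgt.ne'), ← hij]
  rw [hsplit]
  exact add_mem (add_mem (diagonal_mem_of_forall_single_mem hdiag _)
    (add_transpose_mem_of_forall_single_add_single_mem hoff U)) (hsmul Y)

end SymmetricModulo

section DarbouxForm

variable {n R : Type*} [Fintype n] [DecidableEq n] [CommRing R] {Ω : Matrix n n R} {ϖ : R}

/-- `Ω` is the matrix of a symplectic form in Darboux coordinates. The last condition says that any
two coordinates lie in a common coordinate Lagrangian, unless they form a hyperbolic pair. -/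
structure IsDarbouxForm (Ω : Matrix n n R) : Prop where
  transpose_eq_neg : Ωᵀ = -Ω
  mul_self : Ω * Ω = -1
  exists_lagrangian_or_isUnit (i j : n) :
    (∃ s, IsCoordinateLagrangian Ω s ∧ i ∈ s ∧ j ∈ s) ∨ i ≠ j ∧ IsUnit (Ω i j)

namespace IsDarbouxForm

variable (h : IsDarbouxForm Ω)
include h

lemma exists_lagrangian (i : n) : ∃ s, IsCoordinateLagrangian Ω s ∧ i ∈ s := by
  rcases h.exists_lagrangian_or_isUnit i i with ⟨s, hs, hi, -⟩ | ⟨hi, -⟩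
  · exact ⟨s, hs, hi⟩
  · exact absurd rfl hi

lemma apply_self (i : n) : Ω i i = 0 := by
  obtain ⟨s, hs, -⟩ := h.exists_lagrangian i
  by_contra hi
  exact iff_not_self (hs i i hi)

lemma mul_mem_leadingTerms_commutator (hϖ : IsUnit (1 + ϖ)) (k : ℕ) {B X : Matrix n n R}
    (hB : Bᵀ - B = ϖ • X) :
    B * Ω ∈ leadingTerms ϖ (k + 1)
      ⁅similitudeCongruenceSubgroup Ω ϖ, similitudeCongruenceSubgroup Ω ϖ⁆ := by
  refine mem_of_transpose_sub_eq_smul (L := (leadingTerms ϖ (k + 1) _).comap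
    (AddMonoidHom.mulRight Ω)) (fun i r => ?_) (fun i j r => ?_) (fun X => ?_) hB
  · obtain ⟨s, hs, hi⟩ := h.exists_lagrangian i
    refine hs.mul_mem_leadingTerms_commutator h.transpose_eq_neg hϖ k (transpose_single ..) ?_
    exact coordinateProjection_mul_single hi i r
  · rcases h.exists_lagrangian_or_isUnit i j with ⟨s, hs, hi, hj⟩ | ⟨-, hij⟩
    · refine hs.mul_mem_leadingTerms_commutator h.transpose_eq_neg hϖ k ?_ ?_
      · rw [IsSymm, transpose_add, transpose_single, transpose_single, add_comm]
      · rw [mul_add, coordinateProjection_mul_single hi, coordinateProjection_mul_single hj]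
    · exact single_add_single_mul_mem_leadingTerms_commutator h.transpose_eq_neg k
        (h.apply_self i) (h.apply_self j) hij r
  · rw [AddSubgroup.mem_comap, AddMonoidHom.mulRight_apply, smul_mul_assoc]
    exact smul_mem_leadingTerms ..

lemma isometryCongruenceSubgroup_le_commutator_sup (hreg : IsRegular ϖ) (hϖ : IsUnit (1 + ϖ))
    (k : ℕ) :
    isometryCongruenceSubgroup Ω (ϖ ^ (k + 2)) ≤
      ⁅similitudeCongruenceSubgroup Ω ϖ, similitudeCongruenceSubgroup Ω ϖ⁆ ⊔
        principalCongruenceSubgroup (Matrix n n R) (ϖ ^ (k + 3)) := by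
  rintro S ⟨hS, A, hA⟩
  have hlie := transpose_mul_add_mul_eq_of_mem_isometryGroup (hreg.pow (k + 2)) hS hA
  have hAΩ : A = -(A * Ω) * Ω := by
    rw [neg_mul, mul_assoc, h.mul_self, mul_neg, mul_one, neg_neg]
  have hskew : (-(A * Ω))ᵀ - -(A * Ω) = ϖ • (ϖ ^ (k + 1) • (Ω * (Aᵀ * Ω * A) * Ω)) := by
    calc (-(A * Ω))ᵀ - -(A * Ω) = -(Ω * (Aᵀ * Ω + Ω * A) * Ω) := by
          have hΩA : Ω * (Ω * A) = -A := by rw [← mul_assoc, h.mul_self, neg_one_mul]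
          have hAΩΩ : Ω * (Aᵀ * Ω) * Ω = -(Ω * Aᵀ) := by
            rw [mul_assoc, mul_assoc, h.mul_self, mul_neg_one, mul_neg]
          rw [mul_add, add_mul, hΩA, hAΩΩ, transpose_neg, transpose_mul, h.transpose_eq_neg]
          simp only [neg_mul]
          abel
      _ = ϖ • (ϖ ^ (k + 1) • (Ω * (Aᵀ * Ω * A) * Ω)) := by
          rw [hlie, smul_smul, ← pow_succ', mul_neg, neg_mul, neg_neg, mul_smul_comm,
            smul_mul_assoc]
  refine mem_sup_of_mem_leadingTerms hA ?_
  rw [hAΩ]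
  exact h.mul_mem_leadingTerms_commutator hϖ k hskew

theorem closure_commutator_similitudeCongruenceSubgroup [TopologicalSpace R] [IsTopologicalRing R]
    [T2Space R] (hadic : IsAdic (Ideal.span {ϖ})) (hreg : IsRegular ϖ) (hϖ : IsUnit (1 + ϖ)) :
    closure ((⁅similitudeCongruenceSubgroup Ω ϖ, similitudeCongruenceSubgroup Ω ϖ⁆ :
        Subgroup (GL n R)) : Set (GL n R)) =
      isometryCongruenceSubgroup Ω (ϖ ^ 2) := by
  have hle := commutator_similitudeCongruenceSubgroup_le Ω ϖ
  refine (closure_minimal hle ?_).antisymm fun S hS =>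
    mem_closure_of_forall_mem_sup hadic fun k => ?_
  · exact (isClosed_isometryGroup Ω).inter (isClosed_principalCongruenceSubgroup hadic 2)
  · have happrox := inf_le_sup_of_forall_inf_le_sup_succ
      (N := fun k => principalCongruenceSubgroup (Matrix n n R) (ϖ ^ (k + 2)))
      (hle.trans inf_le_left) (h.isometryCongruenceSubgroup_le_commutator_sup hreg hϖ) k hS
    exact sup_le_sup_left (principalCongruenceSubgroup_le_of_dvd (pow_dvd_pow ϖ le_self_add)) _
      happrox

end IsDarbouxForm

end DarbouxForm

section OmegaMat

variable (g : ℕ) {R : Type} [CommRing R]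

lemma OmegaMat_transpose : (OmegaMat g R)ᵀ = -OmegaMat g R := by
  ext i j
  simp only [OmegaMat, transpose_apply, Matrix.neg_apply, of_apply]
  split_ifs <;> first | omega | simp

variable {g} in
lemma div_two_eq_of_OmegaMat_apply_ne_zero {i j : Fin (2 * g)} (h : OmegaMat g R i j ≠ 0) :
    (i : ℕ) / 2 = j / 2 ∧ (i : ℕ) % 2 ≠ j % 2 := by
  simp only [OmegaMat, of_apply] at h
  split_ifs at h
  · omega
  · omega
  · exact absurd rfl h

lemma OmegaMat_mul_self : OmegaMat g R * OmegaMat g R = -1 := by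
  ext i j
  let partner : Fin (2 * g) := ⟨i + 1 - 2 * (i % 2), by omega⟩
  rw [mul_apply, Finset.sum_eq_single partner]
  · simp only [OmegaMat, of_apply, partner, Matrix.neg_apply, one_apply, Fin.ext_iff]
    split_ifs <;> first | omega | simp
  · intro k _ hk
    have hik : OmegaMat g R i k = 0 := by
      by_contra hne
      have := div_two_eq_of_OmegaMat_apply_ne_zero hne
      exact hk (Fin.ext (by grind))
    rw [hik, zero_mul]
  · simp

lemma isDarbouxForm_OmegaMat : IsDarbouxForm (OmegaMat g R) where
  transpose_eq_neg := OmegaMat_transpose g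
  mul_self := OmegaMat_mul_self g
  exists_lagrangian_or_isUnit i j := by
    by_cases hij : (i : ℕ) / 2 = j / 2 ∧ i ≠ j
    · refine .inr ⟨hij.2, ?_⟩
      have hne := Fin.val_ne_of_ne hij.2
      simp only [OmegaMat, of_apply]
      split_ifs
      · exact isUnit_one
      · exact isUnit_one.neg
      · omega
    · -- One coordinate from each hyperbolic plane: `i` in its own plane, and in every other plane
      -- the coordinate with the parity of `j`.
      let s : Finset (Fin (2 * g)) :=
        {k | (k : ℕ) % 2 = if (k : ℕ) / 2 = i / 2 then (i : ℕ) % 2 else j % 2}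
      refine .inl ⟨s, fun a b hab => ?_, ?_, ?_⟩
      · have := div_two_eq_of_OmegaMat_apply_ne_zero hab
        simp only [s, Finset.mem_filter_univ]
        split_ifs <;> omega
      · simp [s]
      · simp only [s, Finset.mem_filter_univ]
        split_ifs with hdiv
        · rw [not_and_not_right.mp hij hdiv.symm]
        · rfl

end OmegaMat

theorem maximal_monodromy_stmt5_general {R : Type} [CommRing R] [TopologicalSpace R]
    [IsTopologicalRing R] [T2Space R] {ϖ : R} (hadic : IsAdic (Ideal.span {ϖ}))
    (hreg : IsRegular ϖ) (hϖ : IsUnit (1 + ϖ)) (g : ℕ) :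
    closure ((⁅similitudeCongruenceSubgroup (OmegaMat g R) ϖ,
        similitudeCongruenceSubgroup (OmegaMat g R) ϖ⁆ : Subgroup (GL (Fin (2 * g)) R)) :
          Set (GL (Fin (2 * g)) R)) =
      isometryCongruenceSubgroup (OmegaMat g R) (ϖ ^ 2) :=
  (isDarbouxForm_OmegaMat g).closure_commutator_similitudeCongruenceSubgroup hadic hreg hϖ

section PadicInt

lemma isAdic_span_natCast_padicInt (p : ℕ) [Fact p.Prime] :
    IsAdic (Ideal.span {(p : ℤ_[p])}) := by
  have hball (n : ℕ) : ((Ideal.span {(p : ℤ_[p])} ^ n : Ideal ℤ_[p]) : Set ℤ_[p]) =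
      Metric.closedBall 0 ((p : ℝ) ^ (-n : ℤ)) := by
    ext x
    rw [Ideal.span_singleton_pow, SetLike.mem_coe, mem_closedBall_zero_iff,
      PadicInt.norm_le_pow_iff_mem_span_pow]
  have hp : (1 : ℝ) < p := mod_cast (Fact.out : p.Prime).one_lt
  refine isAdic_iff.mpr ⟨fun n => ?_, fun U hU => ?_⟩
  · rw [hball]
    exact IsUltrametricDist.isOpen_closedBall 0 (zpow_pos (by positivity) _).ne'
  · obtain ⟨ε, hε, hεU⟩ := Metric.nhds_basis_closedBall.mem_iff.mp hU
    obtain ⟨n, hn⟩ := exists_pow_lt_of_lt_one hε (inv_lt_one_of_one_lt₀ hp)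
    refine ⟨n, ?_⟩
    rw [hball]
    refine (Metric.closedBall_subset_closedBall ?_).trans hεU
    rw [_root_.zpow_neg, zpow_natCast, ← inv_pow]
    exact hn.le

lemma isUnit_one_add_natCast_padicInt (p : ℕ) [Fact p.Prime] : IsUnit (1 + (p : ℤ_[p])) := by
  have hp : -(p : ℤ_[p]) ∈ nonunits ℤ_[p] := by
    rw [mem_nonunits_iff, IsUnit.neg_iff]
    exact PadicInt.p_nonunit
  simpa only [sub_neg_eq_add] using IsLocalRing.isUnit_one_sub_self_of_mem_nonunits _ hp

lemma GSpKer_eq_similitudeCongruenceSubgroup (g : ℕ) :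
    GSpKer g = similitudeCongruenceSubgroup (OmegaMat g ℤ_[2]) 2 := by
  have hker : RingHom.ker (PadicInt.toZMod (p := 2)) = Ideal.span {2} := by
    rw [PadicInt.ker_toZMod, PadicInt.maximalIdeal_eq_span_p]
    rfl
  rw [similitudeCongruenceSubgroup, ← ker_generalLinearGroup_map hker]
  rfl

lemma setOf_mem_SpSet_and_redMod4_eq_one (g : ℕ) :
    {x | x ∈ SpSet g ℤ_[2] ∧ redMod4 g x = 1} =
      (isometryCongruenceSubgroup (OmegaMat g ℤ_[2]) (2 ^ 2) : Set (GL (Fin (2 * g)) ℤ_[2])) := by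
  have hker : RingHom.ker (PadicInt.toZModPow (p := 2) 2) = Ideal.span {2 ^ 2} := by
    rw [PadicInt.ker_toZModPow]
    rfl
  rw [isometryCongruenceSubgroup, ← ker_generalLinearGroup_map hker]
  exact Set.ext fun x => and_congr_left fun _ => mem_isometryGroup.symm

end PadicInt

/-- Let `g ≥ 2`. The closure of the commutator subgroup of the kernel of the reduction map
`GSp_{2g}(ℤ_2) → GSp_{2g}(ℤ/2ℤ)` equals the kernel of the reduction map
`Sp_{2g}(ℤ_2) → Sp_{2g}(ℤ/4ℤ)`, i.e. the set of symplectic matrices over `ℤ_2` that reduce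
to the identity mod `4`. -/
theorem maximal_monodromy_stmt5 (g : ℕ) (hg : 2 ≤ g) :
    closure ((⁅GSpKer g, GSpKer g⁆ : Subgroup (GL (Fin (2*g)) ℤ_[2]))
        : Set (GL (Fin (2*g)) ℤ_[2]))
      = {x : GL (Fin (2*g)) ℤ_[2] | x ∈ SpSet g ℤ_[2] ∧ redMod4 g x = 1} := by
  rw [setOf_mem_SpSet_and_redMod4_eq_one, GSpKer_eq_similitudeCongruenceSubgroup]
  exact maximal_monodromy_stmt5_general (isAdic_span_natCast_padicInt 2)
    (.of_ne_zero two_ne_zero) (isUnit_one_add_natCast_padicInt 2) g
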